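/- Let p be an odd prime and let D be an integer that is not a perfect square, and suppose there exists α₀ ∈ ℚ_p with α₀² = D and ‖α₀‖_p < 1. Let (α_n), (b_n) be the sequences produced by Algorithm (3) applied to α₀, and assume the expansion is periodic. Then b_0 = 0 and the pre-period has length exactly 2: there exists k ≥ 1 with b_{n+k} = b_n for all n ≥ 2, but there is no k ≥ 1 with b_{n+k} = b_n for all n ≥ 1. -/

import Mathlib

/-- A rational number `a` is a `p`-adic fraction if `a * p^m` is an integer
for some natural number `m`, i.e. `a ∈ ℤ[1/p]`. -/
def IsPadicFrac (p : ℕ) (a : ℚ) : Prop := ∃ (m : ℕ) (z : ℤ), a * (p : ℚ) ^ m = (z : ℚ)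

/-- `b` is Browkin's integral floor `s α`: the unique `p`-adic fraction with
`|b| < p/2` and `‖α - b‖_p < 1`. -/
def IsIntFloor (p : ℕ) [Fact p.Prime] (α : ℚ_[p]) (b : ℚ) : Prop :=
  IsPadicFrac p b ∧ |b| < (p : ℚ) / 2 ∧ ‖α - (b : ℚ_[p])‖ < 1

/-- `b` is Browkin's fractional floor `t α`: the unique `p`-adic fraction with
`|b| < 1/2` and `‖α - b‖_p ≤ 1`. -/
def IsFracFloor (p : ℕ) [Fact p.Prime] (α : ℚ_[p]) (b : ℚ) : Prop :=
  IsPadicFrac p b ∧ |b| < 1 / 2 ∧ ‖α - (b : ℚ_[p])‖ ≤ 1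

/-- Algorithm (3): `b n = s (α n)` for even `n`, `b n = t (α n)` for odd `n`,
and `α (n + 1) = (α n - b n)⁻¹`. -/
def Alg3 (p : ℕ) [Fact p.Prime] (α : ℕ → ℚ_[p]) (b : ℕ → ℚ) : Prop :=
  (∀ n, Even n → IsIntFloor p (α n) (b n)) ∧
  (∀ n, Odd n → IsFracFloor p (α n) (b n)) ∧
  ∀ n, α (n + 1) = (α n - (b n : ℚ_[p]))⁻¹

theorem IsPadicFrac.sub' {p : ℕ} {a b : ℚ} (ha : IsPadicFrac p a) (hb : IsPadicFrac p b) :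
    IsPadicFrac p (a - b) := by
  obtain ⟨m, z, h⟩ := ha
  obtain ⟨n, w, h'⟩ := hb
  refine ⟨m + n, z * p ^ n - w * p ^ m, ?_⟩
  push_cast
  rw [← h, ← h']
  ring

theorem frac_int {p : ℕ} [Fact p.Prime] {c : ℚ} (hc : IsPadicFrac p c)
    (h : ‖(c : ℚ_[p])‖ ≤ 1) : ∃ z : ℤ, c = z := by
  obtain ⟨m, z, hz⟩ := hc
  have hp0 : (p : ℚ) ≠ 0 := by exact_mod_cast (Fact.out : p.Prime).ne_zero
  have hn : ‖(z : ℚ_[p])‖ ≤ (p : ℝ) ^ (-(m : ℤ)) := by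
    have : (z : ℚ_[p]) = (c : ℚ_[p]) * (p : ℚ_[p]) ^ m := by
      have := congrArg (fun q : ℚ => (q : ℚ_[p])) hz
      push_cast at this
      exact this.symm
    rw [this, norm_mul, norm_pow, Padic.norm_p, zpow_neg, zpow_natCast, inv_pow]
    exact mul_le_of_le_one_left (by positivity) h
  rw [Padic.norm_int_le_pow_iff_dvd] at hn
  obtain ⟨w, hw⟩ := hn
  refine ⟨w, ?_⟩
  rw [hw] at hz
  push_cast at hz
  have : (p : ℚ) ^ m ≠ 0 := pow_ne_zero _ hp0
  apply mul_right_cancel₀ this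
  rw [hz]; ring

theorem frac_zero {p : ℕ} [Fact p.Prime] {c : ℚ} (hc : IsPadicFrac p c)
    (h : ‖(c : ℚ_[p])‖ ≤ 1) (h1 : |c| < 1) : c = 0 := by
  obtain ⟨z, rfl⟩ := frac_int hc h
  have : |z| < 1 := by exact_mod_cast h1
  rw [Int.abs_lt_one_iff] at this
  simp [this]

theorem int_zero {p : ℕ} [Fact p.Prime] {c : ℚ} (hc : IsPadicFrac p c)
    (h : ‖(c : ℚ_[p])‖ < 1) (h1 : |c| < p) : c = 0 := by
  obtain ⟨z, rfl⟩ := frac_int hc h.le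
  have h2 : |z| < (p : ℤ) := by exact_mod_cast h1
  have h3 : ‖(z : ℚ_[p])‖ < 1 := by simpa using h
  rw [Padic.norm_intCast_lt_one_iff] at h3
  have := Int.eq_zero_of_abs_lt_dvd h3 h2
  simp [this]

theorem norm_sub_of_lt {p : ℕ} [Fact p.Prime] {x y : ℚ_[p]} (h : ‖x‖ < ‖y‖) : ‖x - y‖ = ‖y‖ := by
  rw [sub_eq_add_neg, Padic.add_eq_max_of_ne (by rw [norm_neg]; exact h.ne), norm_neg,
    max_eq_right h.le]

theorem norm_of_sub_lt {p : ℕ} [Fact p.Prime] {x y : ℚ_[p]} (h : ‖x - y‖ < ‖x‖) : ‖y‖ = ‖x‖ := by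
  have := norm_sub_of_lt h
  rw [← this]
  simp

theorem norm_big {p : ℕ} [Fact p.Prime] {x : ℚ_[p]} (h : 1 < ‖x‖) : (p : ℝ) ≤ ‖x‖ := by
  by_contra hc
  push Not at hc
  have := (Padic.norm_le_pow_iff_norm_lt_pow_add_one x 0).2 (by simpa using hc)
  simp at this
  linarith

theorem sub_norm_lt {p : ℕ} [Fact p.Prime] {x y : ℚ_[p]} {c : ℝ} (h : ‖x‖ < c) (h' : ‖y‖ < c) :
    ‖x - y‖ < c := by
  have := Padic.nonarchimedean x (-y)
  rw [norm_neg, ← sub_eq_add_neg] at this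
  exact this.trans_lt (max_lt h h')

theorem sub_norm_le {p : ℕ} [Fact p.Prime] {x y : ℚ_[p]} {c : ℝ} (h : ‖x‖ ≤ c) (h' : ‖y‖ ≤ c) :
    ‖x - y‖ ≤ c := by
  have := Padic.nonarchimedean x (-y)
  rw [norm_neg, ← sub_eq_add_neg] at this
  exact this.trans (max_le h h')

/-- the conjugate sequence -/
noncomputable def conjSeq {p : ℕ} [Fact p.Prime] (a : ℚ_[p]) (b : ℕ → ℚ) : ℕ → ℚ_[p]
  | 0 => -a
  | n + 1 => (conjSeq a b n - (b n : ℚ_[p]))⁻¹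

theorem irr {p : ℕ} [Fact p.Prime] {D : ℤ}
    (hD : ¬ ∃ z : ℤ, z * z = D)
    {a : ℚ_[p]} (hsq : a ^ 2 = (D : ℚ_[p])) (r : ℚ) : a ≠ (r : ℚ_[p]) := by
  rintro rfl
  have h : r * r = (D : ℚ) := by
    have : ((r * r : ℚ) : ℚ_[p]) = ((D : ℚ) : ℚ_[p]) := by
      push_cast
      rw [← hsq]; ring
    exact_mod_cast this
  have : IsSquare ((D : ℤ) : ℚ) := ⟨r, h.symm⟩
  rw [Rat.isSquare_intCast_iff] at this
  obtain ⟨z, hz⟩ := this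
  exact hD ⟨z, hz.symm⟩

theorem coef_uniq {p : ℕ} [Fact p.Prime] {a : ℚ_[p]} (ha : ∀ r : ℚ, a ≠ (r : ℚ_[p]))
    {x y : ℚ} (h : (x : ℚ_[p]) + y * a = 0) : x = 0 ∧ y = 0 := by
  have hy : y = 0 := by
    by_contra hy
    apply ha (-x / y)
    have : (y : ℚ_[p]) ≠ 0 := by exact_mod_cast hy
    push_cast
    field_simp
    linear_combination h
  subst hy
  simp at h
  exact ⟨h, rfl⟩

theorem conj_form {p : ℕ} [Fact p.Prime] {D : ℤ} {a : ℚ_[p]} (hsq : a ^ 2 = (D : ℚ_[p]))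
    (ha : ∀ r : ℚ, a ≠ (r : ℚ_[p])) {α : ℕ → ℚ_[p]} {b : ℕ → ℚ} (h0 : α 0 = a)
    (hs : ∀ n, α (n + 1) = (α n - (b n : ℚ_[p]))⁻¹) (n : ℕ) :
    ∃ x y : ℚ, α n = x + y * a ∧ conjSeq a b n = x - y * a := by
  induction n with
  | zero => exact ⟨0, 1, by simp [h0], by simp [conjSeq]⟩
  | succ n ih =>
    obtain ⟨x, y, h1, h2⟩ := ih
    rw [hs, conjSeq, h1, h2]
    by_cases hz : x - b n = 0 ∧ y = 0
    · refine ⟨0, 0, ?_, ?_⟩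
      · have : x = b n := by linarith [hz.1]
        simp [this, hz.2]
      · have : x = b n := by linarith [hz.1]
        simp [this, hz.2]
    have e1 : (x : ℚ_[p]) + y * a - b n ≠ 0 := by
      intro h
      apply hz
      apply coef_uniq ha
      push_cast
      linear_combination h
    have e2 : (x : ℚ_[p]) - y * a - b n ≠ 0 := by
      intro h
      apply hz
      have := coef_uniq ha (x := x - b n) (y := -y) (by push_cast; linear_combination h)
      exact ⟨this.1, by simpa using this.2⟩
    have e3 : (((x - b n) ^ 2 - D * y ^ 2 : ℚ) : ℚ_[p]) =
        ((x : ℚ_[p]) + y * a - b n) * (x - y * a - b n) := by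
      push_cast
      rw [← hsq]; ring
    refine ⟨(x - b n) / ((x - b n) ^ 2 - D * y ^ 2), -y / ((x - b n) ^ 2 - D * y ^ 2), ?_, ?_⟩
    · rw [Rat.cast_div, Rat.cast_div, e3]
      push_cast
      field_simp
      ring
    · rw [Rat.cast_div, Rat.cast_div, e3]
      push_cast
      field_simp
      ring

theorem conj_eq {p : ℕ} [Fact p.Prime] {D : ℤ} {a : ℚ_[p]} (hsq : a ^ 2 = (D : ℚ_[p]))
    (ha : ∀ r : ℚ, a ≠ (r : ℚ_[p])) {α : ℕ → ℚ_[p]} {b : ℕ → ℚ} (h0 : α 0 = a)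
    (hs : ∀ n, α (n + 1) = (α n - (b n : ℚ_[p]))⁻¹) {n m : ℕ} (h : α n = α m) :
    conjSeq a b n = conjSeq a b m := by
  obtain ⟨x, y, h1, h2⟩ := conj_form hsq ha h0 hs n
  obtain ⟨u, v, h3, h4⟩ := conj_form hsq ha h0 hs m
  have := coef_uniq ha (x := x - u) (y := y - v) (by
    push_cast; linear_combination h - h1 + h3)
  have e1 : x = u := by linarith [this.1]
  have e2 : y = v := by linarith [this.2]
  rw [h2, h4, e1, e2]

theorem alpha_irr {p : ℕ} [Fact p.Prime] {a : ℚ_[p]}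
    (ha : ∀ r : ℚ, a ≠ (r : ℚ_[p])) {α : ℕ → ℚ_[p]} {b : ℕ → ℚ} (h0 : α 0 = a)
    (hs : ∀ n, α (n + 1) = (α n - (b n : ℚ_[p]))⁻¹) (n : ℕ) (r : ℚ) : α n ≠ (r : ℚ_[p]) := by
  induction n generalizing r with
  | zero => rw [h0]; exact ha r
  | succ n ih =>
    intro h
    rw [hs] at h
    apply ih (r⁻¹ + b n)
    push_cast
    rw [← h, inv_inv]; ring

theorem stmt_10 (p : ℕ) [Fact p.Prime] (hp : p ≠ 2) (D : ℤ)
    (hD : ¬ ∃ z : ℤ, z * z = D)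
    (α₀ : ℚ_[p]) (hsq : α₀ ^ 2 = (D : ℚ_[p])) (hval : ‖α₀‖ < 1)
    (α : ℕ → ℚ_[p]) (b : ℕ → ℚ) (h0 : α 0 = α₀) (halg : Alg3 p α b)
    (hper : ∃ h k : ℕ, 1 ≤ k ∧ ∀ n, h ≤ n → b (n + k) = b n) :
    b 0 = 0 ∧
      (∃ k : ℕ, 1 ≤ k ∧ ∀ n, 2 ≤ n → b (n + k) = b n) ∧
      ¬ ∃ k : ℕ, 1 ≤ k ∧ ∀ n, 1 ≤ n → b (n + k) = b n := by
  obtain ⟨hE, hO, hs⟩ := halg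
  have ha := fun r => irr hD hsq r
  have hpp : p.Prime := Fact.out
  have hp1 : (1 : ℝ) < p := by exact_mod_cast hpp.one_lt
  have hirr := alpha_irr ha h0 hs
  have hpos : ∀ n, 0 < ‖α n - (b n : ℚ_[p])‖ := fun n =>
    norm_pos_iff.2 (sub_ne_zero.2 (hirr n _))
  have hb0 : b 0 = 0 := by
    obtain ⟨h1, h2, h3⟩ := hE 0 (by simp)
    rw [h0] at h3
    apply int_zero h1
    · have := sub_norm_lt hval h3
      simpa using this
    · have : (0 : ℚ) < p := by exact_mod_cast hpp.pos
      linarith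
  -- norms of complete quotients
  have nO : ∀ n, Odd n → 1 < ‖α n‖ := by
    intro n hn
    obtain ⟨m, rfl⟩ := hn
    rw [hs, norm_inv]
    exact (one_lt_inv₀ (hpos _)).2 (hE (2 * m) (by simp)).2.2
  have nE : ∀ n, Even n → 2 ≤ n → 1 ≤ ‖α n‖ := by
    intro n hn h2
    obtain ⟨m, rfl⟩ : ∃ m, n = m + 1 := ⟨n - 1, by omega⟩
    rw [hs, norm_inv]
    refine (one_le_inv₀ (hpos _)).2 (hO m ?_).2.2
    rw [Nat.even_add_one] at hn
    simpa using hn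
  have nA : ∀ n, 1 ≤ n → 1 ≤ ‖α n‖ := by
    intro n hn
    rcases Nat.even_or_odd n with h | h
    · refine nE n h ?_
      obtain ⟨m, rfl⟩ := h
      omega
    · exact (nO n h).le
  have nb : ∀ n, 1 ≤ n → ‖(b n : ℚ_[p])‖ = ‖α n‖ := by
    intro n hn
    apply norm_of_sub_lt
    rcases Nat.even_or_odd n with h | h
    · exact (hE n h).2.2.trans_le (nA n hn)
    · exact (hO n h).2.2.trans_lt (nO n h)
  -- conjugates
  have c1 : conjSeq α₀ b 1 = - α 1 := by
    rw [hs]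
    simp [conjSeq, hb0, h0, inv_neg]
  have n2 : ‖(2 : ℚ_[p])‖ = 1 := by
    have h := Padic.norm_intCast_lt_one_iff (p := p) (k := 2)
    have hle := Padic.norm_int_le_one (p := p) 2
    push_cast at h hle
    refine le_antisymm hle (not_lt.1 fun hlt => ?_)
    have h5 : p ∣ 2 := by exact_mod_cast h.1 hlt
    exact hp ((Nat.prime_dvd_prime_iff_eq hpp Nat.prime_two).1 h5)
  have c2 : ‖conjSeq α₀ b 2‖ < 1 := by
    have : conjSeq α₀ b 2 = (conjSeq α₀ b 1 - (b 1 : ℚ_[p]))⁻¹ := rfl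
    rw [this, norm_inv, c1]
    have e : - α 1 - (b 1 : ℚ_[p]) = (α 1 - b 1) - 2 * α 1 := by ring
    have n1 := nO 1 (by simp)
    have e2 : ‖(2 : ℚ_[p]) * α 1‖ = ‖α 1‖ := by rw [norm_mul, n2, one_mul]
    rw [e, norm_sub_of_lt, e2]
    · exact inv_lt_one_of_one_lt₀ n1
    · rw [e2]
      exact (hO 1 (by simp)).2.2.trans_lt n1
  have step : ∀ n, 1 ≤ n → ‖conjSeq α₀ b n‖ < ‖α n‖ → ‖conjSeq α₀ b (n + 1)‖ = ‖α n‖⁻¹ := by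
    intro n hn h
    rw [conjSeq, norm_inv, norm_sub_of_lt (by rwa [nb n hn]), nb n hn]
  have cEO : ∀ m, ‖conjSeq α₀ b (2 * m + 2)‖ < 1 ∧ ‖conjSeq α₀ b (2 * m + 3)‖ ≤ 1 := by
    intro m
    have key : ∀ m, ‖conjSeq α₀ b (2 * m + 2)‖ < 1 → ‖conjSeq α₀ b (2 * m + 3)‖ ≤ 1 := by
      intro m h
      have h1 := nA (2 * m + 2) (by omega)
      rw [step (2 * m + 2) (by omega) (h.trans_le h1)]
      exact inv_le_one_of_one_le₀ h1
    induction m with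
    | zero => exact ⟨c2, key 0 c2⟩
    | succ m ih =>
      have : ‖conjSeq α₀ b (2 * (m + 1) + 2)‖ < 1 := by
        have h1 := nO (2 * m + 3) ⟨m + 1, by ring⟩
        have := step (2 * m + 3) (by omega) (ih.2.trans_lt h1)
        rw [show 2 * (m + 1) + 2 = 2 * m + 3 + 1 by ring, this]
        exact inv_lt_one_of_one_lt₀ h1
      exact ⟨this, key _ this⟩
  have cE : ∀ n, Even n → 2 ≤ n → ‖conjSeq α₀ b n‖ < 1 := by
    rintro n ⟨m, rfl⟩ h
    have := (cEO (m - 1)).1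
    rwa [show 2 * (m - 1) + 2 = m + m by omega] at this
  have cO : ∀ n, Odd n → 2 ≤ n → ‖conjSeq α₀ b n‖ ≤ 1 := by
    rintro n ⟨m, rfl⟩ h
    have := (cEO (m - 1)).2
    rwa [show 2 * (m - 1) + 3 = 2 * m + 1 by omega] at this
  -- periodicity of b gives periodicity of α
  have aper : ∀ h k : ℕ, (∀ n, h ≤ n → b (n + k) = b n) → Even k →
      ∀ n, h ≤ n → α (n + k) = α n := by
    intro h k hk hke
    have hsame : ∀ n, Even (n + k) ↔ Even n := by
      intro n; simp [Nat.even_add, hke]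
    have base : ∀ n, h ≤ n → ‖α (n + k) - α n‖ ≤ 1 := by
      intro n hn
      have e : α (n + k) - α n = (α (n + k) - b (n + k)) - (α n - b n) := by
        rw [hk n hn]; ring
      rw [e]
      rcases Nat.even_or_odd n with h1 | h1
      · exact sub_norm_le (hE _ ((hsame n).2 h1)).2.2.le (hE n h1).2.2.le
      · refine sub_norm_le (hO _ ?_).2.2 (hO n h1).2.2
        rw [← Nat.not_even_iff_odd] at h1 ⊢
        rwa [hsame]
    have st : ∀ n, h ≤ n → ‖α (n + k) - α n‖ * ‖α (n + 1)‖ ≤ ‖α (n + 1 + k) - α (n + 1)‖ := by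
      intro n hn
      have z1 : α (n + 1) ≠ 0 := by simpa using hirr (n + 1) 0
      have z2 : α (n + 1 + k) ≠ 0 := by simpa using hirr (n + 1 + k) 0
      have e1 : (α (n + 1))⁻¹ = α n - b n := by rw [hs, inv_inv]
      have e2 : (α (n + 1 + k))⁻¹ = α (n + k) - b n := by
        rw [show n + 1 + k = n + k + 1 by ring, hs, inv_inv, hk n hn]
      have e : (α (n + k) - α n) * α (n + 1) * α (n + 1 + k) = α (n + 1) - α (n + 1 + k) := by
        have : α (n + k) - α n = (α (n + 1 + k))⁻¹ - (α (n + 1))⁻¹ := by rw [e1, e2]; ring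
        rw [this]
        field_simp
      have e' := congrArg norm e
      rw [norm_mul, norm_mul, norm_sub_rev (α (n + 1))] at e'
      rw [← e']
      exact le_mul_of_one_le_right (by positivity) (nA _ (by omega))
    have st2 : ∀ n, h ≤ n → ‖α (n + k) - α n‖ * p ≤ ‖α (n + 2 + k) - α (n + 2)‖ := by
      intro n hn
      have s1 := st n hn
      have s2 := st (n + 1) (by omega)
      have q1 := nA (n + 1) (by omega)
      have q2 := nA (n + 1 + 1) (by omega)
      have hor : (p : ℝ) ≤ ‖α (n + 1)‖ * ‖α (n + 1 + 1)‖ := by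
        rcases Nat.even_or_odd (n + 1) with h1 | h1
        · have := norm_big (nO (n + 1 + 1) h1.add_one)
          nlinarith
        · have := norm_big (nO (n + 1) h1)
          nlinarith
      calc ‖α (n + k) - α n‖ * p ≤ ‖α (n + k) - α n‖ * (‖α (n + 1)‖ * ‖α (n + 1 + 1)‖) := by
            gcongr
        _ = ‖α (n + k) - α n‖ * ‖α (n + 1)‖ * ‖α (n + 1 + 1)‖ := by ring
        _ ≤ ‖α (n + 1 + k) - α (n + 1)‖ * ‖α (n + 1 + 1)‖ := by gcongr
        _ ≤ _ := s2
    have all : ∀ j n, h ≤ n → ‖α (n + k) - α n‖ * (p : ℝ) ^ j ≤ 1 := by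
      intro j
      induction j with
      | zero => simpa using base
      | succ j ih =>
        intro n hn
        calc ‖α (n + k) - α n‖ * (p : ℝ) ^ (j + 1) = ‖α (n + k) - α n‖ * p * (p : ℝ) ^ j := by ring
          _ ≤ ‖α (n + 2 + k) - α (n + 2)‖ * (p : ℝ) ^ j := by
            gcongr
            exact st2 n hn
          _ ≤ 1 := ih (n + 2) (by omega)
    intro n hn
    by_contra hne
    have hpos' : 0 < ‖α (n + k) - α n‖ := norm_pos_iff.2 (sub_ne_zero.2 hne)
    obtain ⟨j, hj⟩ := pow_unbounded_of_one_lt (‖α (n + k) - α n‖⁻¹) hp1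
    have := all j n hn
    rw [inv_lt_iff_one_lt_mul₀ hpos'] at hj
    nlinarith
  have dbl : ∀ h k : ℕ, (∀ n, h ≤ n → b (n + k) = b n) → ∀ n, h ≤ n → b (n + 2 * k) = b n := by
    intro h k hk n hn
    rw [show n + 2 * k = n + k + k by ring, hk _ (by omega), hk n hn]
  refine ⟨hb0, ?_, ?_⟩
  · obtain ⟨h, k, hk1, hk⟩ := hper
    refine ⟨2 * k, by omega, ?_⟩
    have hA := aper h (2 * k) (dbl h k hk) (by simp)
    have back : ∀ n, 2 ≤ n → α (n + 1 + 2 * k) = α (n + 1) →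
        b (n + 2 * k) = b n ∧ α (n + 2 * k) = α n := by
      intro n hn hα
      have hc := conj_eq hsq ha h0 hs hα
      rw [show n + 1 + 2 * k = n + 2 * k + 1 by ring, conjSeq, conjSeq, inv_inj] at hc
      have hc' : ((b (n + 2 * k) - b n : ℚ) : ℚ_[p]) =
          conjSeq α₀ b (n + 2 * k) - conjSeq α₀ b n := by
        push_cast
        linear_combination -hc
      have hb : b (n + 2 * k) = b n := by
        rw [← sub_eq_zero]
        rcases Nat.even_or_odd n with h1 | h1
        · have h2 : Even (n + 2 * k) := by simp [Nat.even_add, h1]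
          apply int_zero ((hE _ h2).1.sub' (hE _ h1).1)
          · rw [hc']
            exact sub_norm_lt (cE _ h2 (by omega)) (cE _ h1 hn)
          · have := abs_sub (b (n + 2 * k)) (b n)
            linarith [(hE _ h2).2.1, (hE _ h1).2.1]
        · have h2 : Odd (n + 2 * k) := by simp [Nat.odd_add, h1]
          apply frac_zero (p := p) ((hO _ h2).1.sub' (hO _ h1).1)
          · rw [hc']
            exact sub_norm_le (cO _ h2 (by omega)) (cO _ h1 hn)
          · have := abs_sub (b (n + 2 * k)) (b n)
            linarith [(hO _ h2).2.1, (hO _ h1).2.1]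
      refine ⟨hb, ?_⟩
      rw [show n + 1 + 2 * k = n + 2 * k + 1 by ring, hs, hs, inv_inj, hb] at hα
      exact sub_left_injective hα
    have desc : ∀ j n, 2 ≤ n → h ≤ n + j → α (n + 2 * k) = α n := by
      intro j
      induction j with
      | zero => intro n _ h2; exact hA n h2
      | succ j ih =>
        intro n hn h2
        exact (back n hn (ih (n + 1) (by omega) (by omega))).2
    intro n hn
    exact (back n hn (desc h (n + 1) (by omega) (by omega))).1
  · rintro ⟨k, hk1, hk⟩
    have h1 := aper 1 (2 * k) (dbl 1 k hk) (by simp) 1 le_rfl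
    have hc := conj_eq hsq ha h0 hs h1
    have h2 := cO (1 + 2 * k) ⟨k, by ring⟩ (by omega)
    rw [hc, c1, norm_neg] at h2
    linarith [nO 1 (by simp)]
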